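/- Let λ > 0 and β ∈ (0,1]. For every n ∈ ℕ₀ and all x, y ∈ ℝ, C_n^{λ,β}(x + y) = ∑_{k=0}^n binom(n,k) C_k^{λ,β}(x) (y)_{n−k}, where (y)_m denotes the falling factorial (y)_0 = 1 and (y)_m = y(y−1)⋯(y−m+1) for m ∈ ℕ. -/

import Mathlib

/-!
The generating function `e^{x log(1+z)} / E_β(λz)` of the `C_n^{λ,β}(x)` turns `x ↦ x + y` into
multiplication by `e^{y log(1+z)} = (1+z)^y`, whose Taylor coefficients at `0` are the generalized
binomial coefficients, so that its `m`-th derivative there is the falling factorial `(y)_m`. The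
identity is then the Leibniz rule for the `n`-th derivative of a product.

The Leibniz rule needs `1 / E_β(λz)` to be smooth at `0`. Since `Γ ≥ 1/2` on `[1, ∞)`, the
coefficients of `E_β` are bounded by `2`, so `E_β` is analytic on the unit disc, and `E_β(0) = 1`.
-/

open MeasureTheory Finset
open scoped ENNReal NNReal

noncomputable section

/-- The complex Mittag-Leffler function `E_β(z) = ∑ zⁿ / Γ(βn+1)`. -/
def mittagLeffler (β : ℝ) (z : ℂ) : ℂ :=
  ∑' n : ℕ, z ^ n / (Complex.Gamma ((β * n + 1 : ℝ) : ℂ))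

/-- The real Mittag-Leffler function `E_β(x) = ∑ xⁿ / Γ(βn+1)`. -/
def mittagLefflerR (β : ℝ) (x : ℝ) : ℝ :=
  ∑' n : ℕ, x ^ n / Real.Gamma (β * n + 1)

/-- The fractional Poisson measure `π_{λ,β} = ∑_k (λᵏ/k!) E_β⁽ᵏ⁾(-λ) δ_k` on `ℝ`. -/
def fracPoisson (lam β : ℝ) : Measure ℝ :=
  Measure.sum fun k : ℕ =>
    ENNReal.ofReal (lam ^ k / k.factorial * iteratedDeriv k (mittagLefflerR β) (-lam)) •
      Measure.dirac (k : ℝ)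

/-- The Poisson measure with rate `μ` on `ℝ`, `π_μ({k}) = (μᵏ/k!) e^{-μ}`. -/
def poissonMeasureR (μ : ℝ) : Measure ℝ :=
  Measure.sum fun k : ℕ =>
    ENNReal.ofReal (μ ^ k / k.factorial * Real.exp (-μ)) • Measure.dirac (k : ℝ)

/-- The generalized Appell polynomials
`C_n^{λ,β}(x) = dⁿ/dzⁿ [e^{x log(1+z)} / E_β(λz)]` at `z = 0`. -/
def genAppell (lam β : ℝ) (n : ℕ) (x : ℂ) : ℂ :=
  iteratedDeriv n
    (fun z : ℂ => Complex.exp (x * Complex.log (1 + z)) / mittagLeffler β (lam * z)) 0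

/-- The Appell polynomials `A_n^{λ,β}(x) = dⁿ/dzⁿ [e^{zx} / E_β(λ(eᶻ-1))]` at `z = 0`. -/
def appell (lam β : ℝ) (n : ℕ) (x : ℂ) : ℂ :=
  iteratedDeriv n
    (fun z : ℂ => Complex.exp (z * x) / mittagLeffler β (lam * (Complex.exp z - 1))) 0

/-- Stirling numbers of the first kind, via `(log(1+z))^k = k! ∑_{n≥k} s(n,k) zⁿ/n!`. -/
def stirlingFst (n k : ℕ) : ℝ :=
  iteratedDeriv n (fun x : ℝ => (Real.log (1 + x)) ^ k) 0 / k.factorial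

/-- Stirling numbers of the second kind, via `(eᶻ-1)^k = k! ∑_{n≥k} S(n,k) zⁿ/n!`. -/
def stirlingSnd (n k : ℕ) : ℝ :=
  iteratedDeriv n (fun x : ℝ => (Real.exp x - 1) ^ k) 0 / k.factorial

/-- The `n`-th moment of the fractional Poisson measure. -/
def fpMoment (lam β : ℝ) (n : ℕ) : ℝ := ∫ x, x ^ n ∂(fracPoisson lam β)

/-- `M̃_{λ,β}(m) = m! λᵐ / Γ(mβ+1)`. -/
def tildeM (lam β : ℝ) (m : ℕ) : ℝ := m.factorial * lam ^ m / Real.Gamma (m * β + 1)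

/-- The (partial exponential) Bell polynomials `B_{n,k}(x₁, …, x_{n-k+1})`. -/
def bellPoly (n k : ℕ) (x : ℕ → ℂ) : ℂ :=
  ∑ j ∈ (Fintype.piFinset fun _ : Fin (n - k + 1) => Finset.range (n + 1)).filter
      (fun j => (∑ i, j i) = k ∧ (∑ i, (i.1 + 1) * j i) = n),
    (n.factorial : ℂ) / (∏ i, ((j i).factorial : ℂ)) *
      ∏ i, (x (i.1 + 1) / ((i.1 + 1).factorial : ℂ)) ^ j i

section MittagLeffler

open FormalMultilinearSeries

lemma one_half_le_realGamma {x : ℝ} (hx : 1 ≤ x) : 1 / 2 ≤ Real.Gamma x := by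
  have one_le_Gamma {t : ℝ} (ht : 2 ≤ t) : 1 ≤ Real.Gamma t := by
    simpa using Real.Gamma_strictMonoOn_Ici.monotoneOn Set.self_mem_Ici ht ht
  rcases le_total 2 x with h2x | hx2
  · linarith [one_le_Gamma h2x]
  · have hmul : 1 ≤ x * Real.Gamma x := by
      simpa [Real.Gamma_add_one (by linarith : x ≠ 0)] using
        one_le_Gamma (by linarith : 2 ≤ x + 1)
    have hpos : 0 < Real.Gamma x := Real.Gamma_pos_of_pos (by linarith)
    linarith [mul_le_mul_of_nonneg_right hx2 hpos.le]

lemma one_le_ofScalars_radius_of_norm_le {𝕜 : Type*} (E : Type*) [NontriviallyNormedField 𝕜]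
    [NormedRing E] [NormOneClass E] [NormedAlgebra 𝕜 E] {c : ℕ → 𝕜} {C : ℝ}
    (hc : ∀ n, ‖c n‖ ≤ C) : 1 ≤ (ofScalars E c).radius :=
  le_radius_of_bound (r := 1) _ C fun n => by simpa [ofScalars_norm] using hc n

lemma norm_inv_Gamma_le_two {x : ℝ} (hx : 1 ≤ x) : ‖(Complex.Gamma x)⁻¹‖ ≤ 2 := by
  have hΓ := one_half_le_realGamma hx
  rw [Complex.Gamma_ofReal, norm_inv, Complex.norm_of_nonneg (by linarith)]
  simpa using inv_anti₀ one_half_pos hΓ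

lemma mittagLeffler_eq_ofScalarsSum (β : ℝ) :
    mittagLeffler β =
      ofScalarsSum fun n : ℕ => (Complex.Gamma ((β * n + 1 : ℝ) : ℂ))⁻¹ := by
  simp only [ofScalarsSum_eq_tsum, smul_eq_mul, ← div_eq_inv_mul]
  rfl

lemma hasFPowerSeriesOnBall_mittagLeffler {β : ℝ} (hβ : 0 ≤ β) :
    HasFPowerSeriesOnBall (mittagLeffler β)
      (ofScalars ℂ fun n : ℕ => (Complex.Gamma ((β * n + 1 : ℝ) : ℂ))⁻¹) 0 1 := by
  have hradius := one_le_ofScalars_radius_of_norm_le ℂ fun n : ℕ =>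
    norm_inv_Gamma_le_two (le_add_of_nonneg_left (by positivity : 0 ≤ β * n))
  rw [mittagLeffler_eq_ofScalarsSum]
  exact (FormalMultilinearSeries.hasFPowerSeriesOnBall _ (one_pos.trans_le hradius)).mono one_pos
    hradius

lemma mittagLeffler_zero (β : ℝ) : mittagLeffler β 0 = 1 := by
  simp [mittagLeffler_eq_ofScalarsSum]

lemma analyticAt_inv_mittagLeffler_mul {β : ℝ} (hβ : 0 ≤ β) (c : ℂ) :
    AnalyticAt ℂ (fun z => (mittagLeffler β (c * z))⁻¹) 0 := by
  have hE : AnalyticAt ℂ (mittagLeffler β) (c * 0) := by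
    simpa using (hasFPowerSeriesOnBall_mittagLeffler hβ).analyticAt
  have hlin : AnalyticAt ℂ (c * ·) 0 := by fun_prop
  exact (hE.fun_comp hlin).inv (by simp [mittagLeffler_zero])

end MittagLeffler

lemma descPochhammer_eval_eq_factorial_mul_choose {R : Type*} [CommRing R] [BinomialRing R]
    (a : R) (n : ℕ) : (descPochhammer R n).eval a = n.factorial * Ring.choose a n := by
  rw [← nsmul_eq_mul, ← Ring.descPochhammer_eq_factorial_smul_choose, ← Polynomial.aeval_eq_smeval,
    Polynomial.aeval_def, ← Polynomial.eval_map, descPochhammer_map]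

lemma iteratedDeriv_one_add_cpow_zero (a : ℂ) (n : ℕ) :
    iteratedDeriv n (fun z : ℂ => (1 + z) ^ a) 0 = (descPochhammer ℂ n).eval a := by
  have hseries := Complex.one_add_cpow_hasFPowerSeriesAt_zero (a := a)
  have hcoeff : iteratedDeriv n (fun z : ℂ => (1 + z) ^ a) 0 / n.factorial = Ring.choose a n :=
    congrFun ((FormalMultilinearSeries.ofScalars_series_eq_iff ..).mp
      (hseries.analyticAt.hasFPowerSeriesAt.eq_formalMultilinearSeries hseries)) n
  rw [descPochhammer_eval_eq_factorial_mul_choose, ← hcoeff,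
    mul_div_cancel₀ _ (Nat.cast_ne_zero.mpr n.factorial_ne_zero)]

lemma exp_mul_log_one_add_eventuallyEq (a : ℂ) :
    (fun z : ℂ => Complex.exp (a * Complex.log (1 + z))) =ᶠ[nhds 0] fun z => (1 + z) ^ a := by
  have hne : ∀ᶠ z : ℂ in nhds 0, 1 + z ≠ 0 :=
    (continuous_const_add 1).continuousAt.eventually_ne (by simp)
  filter_upwards [hne] with z hz
  rw [Complex.cpow_def_of_ne_zero hz, mul_comm]

lemma iteratedDeriv_exp_mul_log_one_add_zero (a : ℂ) (n : ℕ) :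
    iteratedDeriv n (fun z : ℂ => Complex.exp (a * Complex.log (1 + z))) 0 =
      (descPochhammer ℂ n).eval a := by
  rw [(exp_mul_log_one_add_eventuallyEq a).iteratedDeriv_eq, iteratedDeriv_one_add_cpow_zero]

lemma analyticAt_exp_mul_log_one_add (a : ℂ) :
    AnalyticAt ℂ (fun z : ℂ => Complex.exp (a * Complex.log (1 + z))) 0 :=
  Complex.one_add_cpow_hasFPowerSeriesAt_zero.analyticAt.congr
    (exp_mul_log_one_add_eventuallyEq a).symm

lemma iteratedDeriv_exp_add_mul_log_mul {g : ℂ → ℂ} {n : ℕ} (hg : ContDiffAt ℂ n g 0) (x y : ℂ) :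
    iteratedDeriv n (fun z => Complex.exp ((x + y) * Complex.log (1 + z)) * g z) 0 =
      ∑ k ∈ range (n + 1), (n.choose k : ℂ) *
        iteratedDeriv k (fun z => Complex.exp (x * Complex.log (1 + z)) * g z) 0 *
          (descPochhammer ℂ (n - k)).eval y := by
  have hsplit : (fun z => Complex.exp ((x + y) * Complex.log (1 + z)) * g z) =
      (fun z => Complex.exp (x * Complex.log (1 + z)) * g z) *
        fun z => Complex.exp (y * Complex.log (1 + z)) := by
    ext z
    simp only [Pi.mul_apply, add_mul, Complex.exp_add]
    ring
  rw [hsplit, iteratedDeriv_mul ((analyticAt_exp_mul_log_one_add x).contDiffAt.mul hg)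
    (analyticAt_exp_mul_log_one_add y).contDiffAt]
  simp only [iteratedDeriv_exp_mul_log_one_add_zero]

theorem stmt7_general {β : ℝ} (hβ : 0 ≤ β) (lam : ℝ) (n : ℕ) (x y : ℂ) :
    genAppell lam β n (x + y) =
      ∑ k ∈ range (n + 1), (n.choose k : ℂ) * genAppell lam β k x *
        (descPochhammer ℂ (n - k)).eval y := by
  simp only [genAppell, div_eq_mul_inv]
  exact iteratedDeriv_exp_add_mul_log_mul (analyticAt_inv_mittagLeffler_mul hβ lam).contDiffAt x y

theorem stmt7 (lam β : ℝ) (hlam : 0 < lam) (hβ0 : 0 < β) (hβ1 : β ≤ 1) (n : ℕ) (x y : ℝ) :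
    genAppell lam β n ((x : ℂ) + (y : ℂ)) =
      ∑ k ∈ Finset.range (n + 1), (n.choose k : ℂ) * genAppell lam β k x *
        (descPochhammer ℂ (n - k)).eval (y : ℂ) :=
  stmt7_general hβ0.le lam n x y
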